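/- For every integer n ≥ 1, N̄(0,4,n) − N̄(2,4,n) equals 2 if n is a perfect square, and equals 0 if n is not a perfect square. -/

import Mathlib

/-- An overpartition of `n`: a partition of `n` together with a chosen subset of its
distinct part sizes (the overlined parts). -/
def Overpartition (n : ℕ) : Type :=
  {P : n.Partition × Finset ℕ // P.2 ⊆ P.1.parts.toFinset}

/-- The Dyson rank of an overpartition: largest part minus number of parts. -/
def Overpartition.rank {n : ℕ} (P : Overpartition n) : ℤ :=
  (P.1.1.parts.sup : ℤ) - (P.1.1.parts.card : ℤ)

/-- `nbarRank m n` is the number of overpartitions of `n` with rank `m`. -/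
noncomputable def nbarRank (m : ℤ) (n : ℕ) : ℕ :=
  Nat.card {P : Overpartition n // P.rank = m}

/-- `nbar a c n` is the number of overpartitions of `n` with rank congruent to `a` mod `c`. -/
noncomputable def nbar (a : ℤ) (c : ℕ) (n : ℕ) : ℕ :=
  Nat.card {P : Overpartition n // P.rank ≡ a [ZMOD (c : ℤ)]}

/-- `pbar n` is the number of overpartitions of `n`. -/
noncomputable def pbar (n : ℕ) : ℕ := Nat.card (Overpartition n)

/-!
Give an overpartition with largest part `ℓ` and `k` parts the weight `(-w) ^ ℓ * w ^ k`. For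
`w = -i` this is `i ^ rank`, whose real part is `1`, `-1` or `0` according as the rank is `0`, `2`
or odd modulo `4`. With `A m w = ∏ j ∈ [1, m], (1 + w q ^ j) / (1 - w q ^ j)`, sorting by largest
part shows that the nonempty overpartitions have the weighted generating function
`S w = ∑ m, (-w) ^ (m + 1) * (A (m + 1) w - A m w)`. The relations
`(1 - w q ^ (m + 1)) * A (m + 1) w = (1 + w q ^ (m + 1)) * A m w` and
`(1 - w q) * A (m + 1) w = (1 + w q) * A m (w q)` make `S w + w ^ 2 q * S (w q)` telescope to
`-2 w ^ 2 q`, and iterating `w ↦ w q` gives `2 + S w = 2 * ∑ r, (-w ^ 2) ^ r * q ^ (r ^ 2)`. For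
`w = -i` the factor `-w ^ 2` is `1`.
-/

open Finset PowerSeries

section CayleyTransform

variable {R : Type*} [CommRing R]

/-- The Cayley transform `(1 + f) / (1 - f)` of a power series `f` with zero constant term (a junk
value for other `f`). For `f = w q ^ j` it is the factor that parts of size `j` contribute to the
generating function of overpartitions. -/
noncomputable def cayley (f : R⟦X⟧) : R⟦X⟧ :=
  (1 + f) * invOfUnit (1 - f) 1

variable {f : R⟦X⟧}

theorem one_sub_mul_cayley (hf : constantCoeff f = 0) : (1 - f) * cayley f = 1 + f := by
  rw [cayley, mul_left_comm, mul_invOfUnit _ _ (by simp [hf]), mul_one]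

open scoped PowerSeries.WithPiTopology in
theorem one_add_tsum_two_mul_pow_eq_cayley [TopologicalSpace R] [IsTopologicalRing R] [T2Space R]
    (hf : constantCoeff f = 0) : 1 + ∑' j : ℕ, 2 * f ^ (j + 1) = cayley f := by
  have hgeom := WithPiTopology.tsum_pow_mul_one_sub_of_constantCoeff_eq_zero hf
  have hsummable : Summable (f ^ ·) := WithPiTopology.summable_pow_of_constantCoeff_eq_zero hf
  have hshift : ∑' j : ℕ, 2 * f ^ (j + 1) = 2 * f * ∑' j : ℕ, f ^ j := by
    rw [← hsummable.tsum_mul_left]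
    exact tsum_congr fun j => by ring
  rw [hshift]
  linear_combination (cayley f - 1) * hgeom - (∑' j : ℕ, f ^ j) * one_sub_mul_cayley hf

end CayleyTransform

theorem sum_range_ite_eq_sq {M : Type*} [AddCommMonoid M] (n : ℕ) (g : ℕ → M) :
    ∑ r ∈ range (n + 1), (if n = r ^ 2 then g r else 0) =
      if IsSquare n then g n.sqrt else 0 := by
  split_ifs with hn
  · obtain ⟨s, rfl⟩ := hn
    have hs (r : ℕ) : s * s = r ^ 2 ↔ s = r := by
      rw [← sq, Nat.pow_left_inj two_ne_zero]
    have hmem : s < s * s + 1 := Nat.lt_succ_of_le (Nat.le_mul_self s)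
    simp [hs, hmem]
  · exact sum_eq_zero fun r _ => if_neg fun hr => hn ⟨r, hr.trans (sq r)⟩

theorem prod_toFinsupp_ite_le {α R : Type*} [SemilatticeSup α] [OrderBot α] [DecidableEq α]
    [DecidableLE α] [CommSemiring R] (z : R) (m : α) (s : Multiset α) :
    (s.toFinsupp.prod fun i c => if i ≤ m then 2 * z ^ c else 0) =
      if s.sup ≤ m then 2 ^ #s.toFinset * z ^ s.card else 0 := by
  simp only [Finsupp.prod, Multiset.toFinsupp_support, Multiset.toFinsupp_apply, prod_ite_zero,
    Multiset.mem_toFinset, Multiset.sup_le, prod_mul_distrib, prod_const, prod_pow_eq_pow_sum,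
    Multiset.toFinset_sum_count_eq]

theorem re_I_zpow (m : ℤ) : (Complex.I ^ m).re =
    (if m ≡ 0 [ZMOD 4] then 1 else 0) - (if m ≡ 2 [ZMOD 4] then 1 else 0) := by
  have hmod : m % 4 = 0 ∨ m % 4 = 1 ∨ m % 4 = 2 ∨ m % 4 = 3 := by lia
  rw [Complex.I_zpow_eq_zpow_mod]
  rcases hmod with h | h | h | h <;> simp [Int.ModEq, h, zpow_ofNat]

namespace Overpartition

section FunctionalEquation

variable {R : Type*} [CommRing R] (w : R⟦X⟧)

/-- The generating function `∏ j ∈ [1, m], (1 + w q ^ j) / (1 - w q ^ j)` of the overpartitions with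
all parts at most `m`, where `w` marks the number of parts. Here `w` may itself be a power series,
so that the substitution `w ↦ w q` is available. -/
noncomputable def boundedGenFun (m : ℕ) : R⟦X⟧ :=
  ∏ j ∈ range m, cayley (w * X ^ (j + 1))

theorem boundedGenFun_zero : boundedGenFun w 0 = 1 :=
  prod_range_zero _

theorem one_sub_mul_boundedGenFun_succ (m : ℕ) :
    (1 - w * X ^ (m + 1)) * boundedGenFun w (m + 1) =
      (1 + w * X ^ (m + 1)) * boundedGenFun w m := by
  rw [boundedGenFun, prod_range_succ, mul_left_comm, one_sub_mul_cayley (by simp), mul_comm,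
    boundedGenFun]

theorem one_sub_mul_boundedGenFun_succ_eq_shift (m : ℕ) :
    (1 - w * X) * boundedGenFun w (m + 1) = (1 + w * X) * boundedGenFun (w * X) m := by
  have hshift : ∀ j : ℕ, w * X ^ (j + 1 + 1) = w * X * X ^ (j + 1) := fun j => by ring
  simp only [boundedGenFun, prod_range_succ', hshift, zero_add, pow_one]
  rw [mul_left_comm, one_sub_mul_cayley (by simp), mul_comm]

/-- The generating function of the nonempty overpartitions with largest part `ℓ ≤ N`, where an
overpartition with `k` parts has weight `(-w) ^ ℓ * w ^ k`. -/
noncomputable def signedGenFun (N : ℕ) : R⟦X⟧ :=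
  ∑ m ∈ range N, (-w) ^ (m + 1) * (boundedGenFun w (m + 1) - boundedGenFun w m)

theorem signedGenFun_eq (N : ℕ) :
    signedGenFun w N = -w ^ 2 * X * (2 + signedGenFun (w * X) N -
      (-(w * X)) ^ N * (boundedGenFun w N + boundedGenFun (w * X) N)) := by
  induction N with
  | zero => simp only [signedGenFun, range_zero, sum_empty, boundedGenFun_zero]; ring
  | succ N ih =>
    have hsucc (v : R⟦X⟧) : signedGenFun v (N + 1) = signedGenFun v N +
        (-v) ^ (N + 1) * (boundedGenFun v (N + 1) - boundedGenFun v N) := sum_range_succ _ N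
    have hpow : (-(w * X)) ^ N = (-w) ^ N * X ^ N := by rw [← neg_mul, mul_pow]
    rw [hsucc, hsucc, ih, pow_succ (-(w * X)), hpow]
    linear_combination (-w) ^ (N + 1) * one_sub_mul_boundedGenFun_succ w N -
      w ^ 2 * X * ((-w) ^ N * X ^ N) * one_sub_mul_boundedGenFun_succ_eq_shift w N

theorem X_pow_dvd_two_add_signedGenFun_sub (N K : ℕ) :
    X ^ N ∣ 2 + signedGenFun w N - (2 * ∑ r ∈ range K, (-w ^ 2) ^ r * X ^ r ^ 2 +
      (-w ^ 2) ^ K * X ^ K ^ 2 * (2 + signedGenFun (w * X ^ K) N)) := by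
  induction K with
  | zero => simp
  | succ K ih =>
    have hrec := signedGenFun_eq (w * X ^ K) N
    rw [mul_assoc w, ← pow_succ] at hrec
    have herror : X ^ N ∣ (-(w * X ^ (K + 1))) ^ N :=
      pow_dvd_pow_of_dvd ((dvd_mul_of_dvd_right (dvd_pow_self X K.succ_ne_zero) w).neg_right) N
    convert! ih.sub (herror.mul_right ((-w ^ 2) ^ (K + 1) * X ^ (K + 1) ^ 2 *
      (boundedGenFun (w * X ^ K) N + boundedGenFun (w * X ^ (K + 1)) N))) using 1
    rw [hrec, sum_range_succ]
    ring

theorem coeff_signedGenFun_C (z : R) {n : ℕ} (hn : n ≠ 0) :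
    coeff n (signedGenFun (C z) (n + 1)) =
      if IsSquare n then 2 * (-z ^ 2) ^ n.sqrt else 0 := by
  have hdvd := X_pow_dvd_two_add_signedGenFun_sub (C z) (n + 1) (n + 1)
  have hcoeff := X_pow_dvd_iff.mp hdvd n n.lt_succ_self
  have hlast (g h : R⟦X⟧) : coeff n (g * X ^ (n + 1) ^ 2 * h) = 0 := by
    rw [mul_right_comm, coeff_mul_X_pow', if_neg (by nlinarith)]
  have htwo : (2 : R⟦X⟧) = C 2 := (map_ofNat C 2).symm
  have hmonomial (r : ℕ) : (-C z ^ 2) ^ r * X ^ r ^ 2 = C ((-z ^ 2) ^ r) * X ^ r ^ 2 := by simp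
  rw [map_sub, map_add, map_add, hlast, add_zero, htwo, coeff_C, if_neg hn, zero_add,
    sub_eq_zero, coeff_C_mul, map_sum] at hcoeff
  simp only [hmonomial, coeff_C_mul, coeff_X_pow, mul_ite, mul_one, mul_zero] at hcoeff
  rw [hcoeff, sum_range_ite_eq_sq n ((-z ^ 2) ^ ·), mul_ite, mul_zero]

end FunctionalEquation

section Statistics

variable {n : ℕ}

/-- The partition obtained from an overpartition by forgetting the overlines. -/
def toPartition (P : Overpartition n) : n.Partition :=
  P.1.1

/-- The largest part of an overpartition, which is `0` for the empty overpartition. -/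
def largestPart (P : Overpartition n) : ℕ :=
  P.toPartition.parts.sup

/-- The number of parts of an overpartition, counted with multiplicity. -/
def numParts (P : Overpartition n) : ℕ :=
  P.toPartition.parts.card

/-- An overpartition as a partition together with an element of the powerset of its set of part
sizes. -/
def equivSigma (n : ℕ) : Overpartition n ≃ (p : n.Partition) × p.parts.toFinset.powerset where
  toFun P := ⟨P.toPartition, P.1.2, mem_powerset.mpr P.2⟩
  invFun Q := ⟨(Q.1, Q.2.1), mem_powerset.mp Q.2.2⟩

instance (n : ℕ) : Fintype (Overpartition n) :=
  Fintype.ofEquiv _ (equivSigma n).symm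

theorem sum_eq_sum_partition {M : Type*} [AddCommMonoid M] (g : n.Partition → M) :
    ∑ P : Overpartition n, g P.toPartition =
      ∑ p : n.Partition, 2 ^ #p.parts.toFinset • g p := by
  refine ((equivSigma n).sum_comp fun Q => g Q.1).trans ?_
  rw [Fintype.sum_sigma]
  simp

theorem largestPart_le (P : Overpartition n) : P.largestPart ≤ n :=
  Multiset.sup_le.mpr fun _ => Nat.Partition.le_of_mem_parts

theorem largestPart_pos (hn : n ≠ 0) (P : Overpartition n) : 0 < P.largestPart := by
  have hparts : P.toPartition.parts ≠ 0 := fun h =>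
    hn <| by rw [← P.toPartition.parts_sum, h, Multiset.sum_zero]
  obtain ⟨b, hb⟩ := Multiset.exists_mem_of_ne_zero hparts
  exact (P.toPartition.parts_pos hb).trans_le (Multiset.le_sup hb)

end Statistics

section Coefficients

variable {R : Type*} [CommRing R] (z : R) (n m : ℕ)

open scoped PowerSeries.WithPiTopology in
theorem genFun_eq_boundedGenFun :
    Nat.Partition.genFun (fun i c => if i ≤ m then 2 * z ^ c else 0) = boundedGenFun (C z) m := by
  let _ : TopologicalSpace R := ⊥
  have : DiscreteTopology R := ⟨rfl⟩
  refine (Nat.Partition.hasProd_genFun _).unique ?_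
  have hfactor (k : ℕ) : 1 + ∑' j : ℕ, (if k + 1 ≤ m then 2 * z ^ (j + 1) else 0) •
      (X : R⟦X⟧) ^ ((k + 1) * (j + 1)) =
      if k ∈ range m then cayley (C z * X ^ (k + 1)) else 1 := by
    simp only [mem_range, Nat.lt_iff_add_one_le]
    split_ifs
    · rw [← one_add_tsum_two_mul_pow_eq_cayley (by simp)]
      congr! 3 with j
      rw [smul_eq_C_mul, map_mul, map_ofNat, map_pow, mul_pow, ← pow_mul, mul_assoc]
    · simp
  simp only [hfactor, boundedGenFun]
  rw [← prod_congr rfl fun k hk => if_pos hk]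
  exact hasProd_prod_of_ne_finset_one fun k hk => if_neg hk

theorem coeff_boundedGenFun_C :
    coeff n (boundedGenFun (C z) m) =
      ∑ P : Overpartition n, if P.largestPart ≤ m then z ^ P.numParts else 0 := by
  rw [← genFun_eq_boundedGenFun, Nat.Partition.coeff_genFun]
  refine Eq.trans ?_ (sum_eq_sum_partition fun p =>
    if p.parts.sup ≤ m then z ^ p.parts.card else 0).symm
  simp only [prod_toFinsupp_ite_le, smul_ite, smul_zero, nsmul_eq_mul, Nat.cast_pow, Nat.cast_ofNat]

theorem coeff_boundedGenFun_C_succ_sub :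
    coeff n (boundedGenFun (C z) (m + 1) - boundedGenFun (C z) m) =
      ∑ P : Overpartition n, if P.largestPart = m + 1 then z ^ P.numParts else 0 := by
  rw [map_sub, coeff_boundedGenFun_C, coeff_boundedGenFun_C, ← sum_sub_distrib]
  refine sum_congr rfl fun P _ => ?_
  rcases lt_trichotomy P.largestPart (m + 1) with hlt | heq | hgt
  · simp [hlt.le, Nat.le_of_lt_succ hlt, hlt.ne]
  · simp [heq]
  · simp [hgt.not_ge, (m.lt_succ_self.trans hgt).not_ge, hgt.ne']

variable {n}

theorem coeff_signedGenFun_C_eq_sum (hn : n ≠ 0) :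
    coeff n (signedGenFun (C z) (n + 1)) =
      ∑ P : Overpartition n, (-z) ^ P.largestPart * z ^ P.numParts := by
  have hweight (m : ℕ) : (-C z : R⟦X⟧) ^ (m + 1) = C ((-z) ^ (m + 1)) := by simp
  simp only [signedGenFun, map_sum, hweight, coeff_C_mul, coeff_boundedGenFun_C_succ_sub, mul_sum]
  rw [sum_comm]
  refine sum_congr rfl fun P _ => ?_
  obtain ⟨l, hl⟩ := Nat.exists_eq_add_one_of_ne_zero (P.largestPart_pos hn).ne'
  have hmem : l < n + 1 := by linarith [P.largestPart_le]
  simp [hl, hmem]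

theorem sum_neg_pow_largestPart_mul_pow_numParts (hn : n ≠ 0) :
    ∑ P : Overpartition n, (-z) ^ P.largestPart * z ^ P.numParts =
      if IsSquare n then 2 * (-z ^ 2) ^ n.sqrt else 0 := by
  rw [← coeff_signedGenFun_C_eq_sum z hn, coeff_signedGenFun_C z hn]

end Coefficients

section RankModFour

theorem I_zpow_rank {n : ℕ} (P : Overpartition n) :
    Complex.I ^ P.rank = Complex.I ^ P.largestPart * (-Complex.I) ^ P.numParts := by
  rw [← Complex.inv_I, inv_pow, ← div_eq_mul_inv,
    ← zpow_natCast_sub_natCast₀ Complex.I_ne_zero]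
  rfl

theorem sum_I_zpow_rank {n : ℕ} (hn : n ≠ 0) :
    ∑ P : Overpartition n, Complex.I ^ P.rank = if IsSquare n then 2 else 0 := by
  simpa [I_zpow_rank] using sum_neg_pow_largestPart_mul_pow_numParts (-Complex.I) hn

theorem nbar_eq_card_filter (a : ℤ) (c n : ℕ) :
    nbar a c n = #{P : Overpartition n | P.rank ≡ a [ZMOD c]} := by
  rw [nbar, Nat.card_eq_fintype_card, Fintype.card_subtype]

theorem re_sum_I_zpow_rank (n : ℕ) :
    (∑ P : Overpartition n, Complex.I ^ P.rank).re = (nbar 0 4 n : ℝ) - nbar 2 4 n := by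
  simp only [Complex.re_sum, re_I_zpow, sum_sub_distrib, sum_boole, nbar_eq_card_filter,
    Nat.cast_ofNat]

end RankModFour

end Overpartition

theorem stmt12 (n : ℕ) (hn : 1 ≤ n) :
    (nbar 0 4 n : ℤ) - (nbar 2 4 n : ℤ) = if IsSquare n then 2 else 0 := by
  have hre : (nbar 0 4 n : ℝ) - nbar 2 4 n = if IsSquare n then 2 else 0 := by
    rw [← Overpartition.re_sum_I_zpow_rank,
      Overpartition.sum_I_zpow_rank (Nat.one_le_iff_ne_zero.mp hn)]
    split_ifs <;> simp
  exact_mod_cast hre
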